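/- Let n ≥ 2 and 1 ≤ α < n. Then there is a constant c_n such that for every f ∈ C_c^∞(ℝ^n) and every x ∈ ℝ^n, 𝒮_{α−1} f(x) ≤ c_n I_α(|∇f|)(x). -/

import Mathlib

open MeasureTheory Metric Set Filter
open scoped ENNReal NNReal Topology

noncomputable section

abbrev Rn (n : ℕ) := EuclideanSpace ℝ (Fin n)

/-- An axis-parallel half-open cube in `ℝⁿ`. -/
structure Cube (n : ℕ) where
  corner : Fin n → ℝ
  side : ℝ
  side_pos : 0 < side

/-- The set of points of a cube. -/
def Cube.carrier {n : ℕ} (Q : Cube n) : Set (Rn n) :=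
  {x | ∀ i, Q.corner i ≤ x i ∧ x i < Q.corner i + Q.side}

/-- Surface measure on the unit sphere `𝕊^{n-1} ⊆ ℝⁿ`. -/
def sphereMeasure (n : ℕ) : Measure (Rn n) :=
  (MeasureTheory.Measure.hausdorffMeasure ((n : ℝ) - 1)).restrict (sphere (0 : Rn n) 1)

/-- `f ∈ C_c^∞(ℝⁿ)`. -/
def IsCcSmooth {n : ℕ} (f : Rn n → ℝ) : Prop :=
  ContDiff ℝ (⊤ : ℕ∞) f ∧ HasCompactSupport f

/-- Truncated rough fractional singular integral. -/
def roughOpTrunc (n : ℕ) (α : ℝ) (Ω f : Rn n → ℝ) (x : Rn n) (ε : ℝ) : ℝ :=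
  ∫ y in {y : Rn n | ε < ‖y‖}, (Ω (‖y‖⁻¹ • y) / ‖y‖ ^ ((n : ℝ) + 1 - α)) * f (x - y)

/-- The rough fractional singular integral `T_{Ω,α} f`, as a principal value. -/
def roughOp (n : ℕ) (α : ℝ) (Ω f : Rn n → ℝ) (x : Rn n) : ℝ :=
  limUnder (𝓝[>] (0 : ℝ)) (roughOpTrunc n α Ω f x)

/-- Riesz potential (modulo its normalizing constant) of a nonnegative function. -/
def rieszPot (n : ℕ) (α : ℝ) (g : Rn n → ℝ) (x : Rn n) : ℝ≥0∞ :=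
  ∫⁻ y, ENNReal.ofReal (g y) / ENNReal.ofReal (‖x - y‖ ^ ((n : ℝ) - α))

/-- `|∇f|`. -/
def gradNorm {n : ℕ} (f : Rn n → ℝ) (y : Rn n) : ℝ := ‖gradient f y‖

/-- Weak Lorentz norm `‖Ω‖_{L^{r,∞}(𝕊^{n-1})}`. -/
def weakLorentzSphere (n : ℕ) (r : ℝ) (Ω : Rn n → ℝ) : ℝ≥0∞ :=
  ⨆ (t : ℝ) (_ : 0 < t), ENNReal.ofReal t * sphereMeasure n {y | t < |Ω y|} ^ (1 / r)

/-- Lorentz norm `‖Ω‖_{L^{r,q}(𝕊^{n-1})}`. -/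
def lorentzSphere (n : ℕ) (r q : ℝ) (Ω : Rn n → ℝ) : ℝ≥0∞ :=
  (ENNReal.ofReal r *
      ∫⁻ t in Ioi (0 : ℝ),
        ENNReal.ofReal t ^ q * sphereMeasure n {y | t < |Ω y|} ^ (q / r) / ENNReal.ofReal t) ^ (1 / q)

/-- The Young function `Φ(t) = t log(1+t)^{1/n'}`, `1/n' = (n-1)/n`. -/
def orliczYoung (n : ℕ) (t : ℝ) : ℝ := t * Real.log (1 + t) ^ (((n : ℝ) - 1) / n)

/-- Admissible Orlicz levels for the `L(log L)^{1/n'}` norm w.r.t. normalized surface measure. -/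
def orliczSet (n : ℕ) (Ω : Rn n → ℝ) : Set ℝ :=
  {lam | 0 < lam ∧ ⨍ y, orliczYoung n (|Ω y| / lam) ∂sphereMeasure n ≤ 1}

/-- Orlicz norm `‖Ω‖_{L(log L)^{1/n'}(𝕊^{n-1})}`. -/
def orliczSphereNorm (n : ℕ) (Ω : Rn n → ℝ) : ℝ := sInf (orliczSet n Ω)

/-- A sparse family of cubes. -/
def IsSparse {n : ℕ} (𝒮 : Set (Cube n)) : Prop :=
  ∃ E : Cube n → Set (Rn n),
    (∀ Q ∈ 𝒮, E Q ⊆ Q.carrier ∧ volume Q.carrier ≤ 2 * volume (E Q)) ∧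
    𝒮.Pairwise fun Q P => Disjoint (E Q) (E P)

/-- A dyadic grid of cubes. -/
def IsDyadicGrid {n : ℕ} (𝒟 : Set (Cube n)) : Prop :=
  (∀ Q ∈ 𝒟, ∃ k : ℤ, Q.side = (2 : ℝ) ^ k) ∧
  (∀ (k : ℤ) (x : Rn n), ∃! Q : Cube n, Q ∈ 𝒟 ∧ Q.side = (2 : ℝ) ^ k ∧ x ∈ Q.carrier) ∧
  (∀ Q ∈ 𝒟, ∀ P ∈ 𝒟, Disjoint Q.carrier P.carrier ∨ Q.carrier ⊆ P.carrier ∨ P.carrier ⊆ Q.carrier)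

/-- The shifted dyadic grid `𝒟_t = {2^k([0,1)^n + m + (-1)^k t)}`. -/
def shiftedGrid (n : ℕ) (t : Fin n → ℝ) : Set (Cube n) :=
  {Q | ∃ (k : ℤ) (m : Fin n → ℤ),
      Q.side = (2 : ℝ) ^ k ∧ Q.corner = fun i => (2 : ℝ) ^ k * ((m i : ℝ) + (-1 : ℝ) ^ k * t i)}

/-- `(⨍_Q |g|^s)^{1/s}` as an extended nonnegative real. -/
def avgLs (n : ℕ) (s : ℝ) (Q : Cube n) (g : Rn n → ℝ) : ℝ≥0∞ :=
  ((volume Q.carrier)⁻¹ * ∫⁻ y in Q.carrier, ENNReal.ofReal |g y| ^ s) ^ (1 / s)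

/-- The `L^s` sparse (or dyadic) fractional operator `I^𝒮_{α,L^s}`. -/
def sparseOpLs (n : ℕ) (α s : ℝ) (𝒮 : Set (Cube n)) (g : Rn n → ℝ) (x : Rn n) : ℝ≥0∞ :=
  ∑' Q : 𝒮, Set.indicator (Q : Cube n).carrier
      (fun _ => ENNReal.ofReal ((Q : Cube n).side ^ α) * avgLs n s (Q : Cube n) g) x

/-- The `L^s` fractional maximal operator `M_{α,L^s}`. -/
def maxOpLs (n : ℕ) (α s : ℝ) (g : Rn n → ℝ) (x : Rn n) : ℝ≥0∞ :=
  ⨆ (Q : Cube n) (_ : x ∈ Q.carrier), ENNReal.ofReal (Q.side ^ α) * avgLs n s Q g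

/-- The measure `w dx` associated with a weight `w`. -/
def wMeasure (n : ℕ) (w : Rn n → ℝ) : Measure (Rn n) :=
  volume.withDensity fun x => ENNReal.ofReal (w x)

/-- Muckenhoupt `A_∞` (via the standard fair-proportion characterization). -/
def IsAinfty {n : ℕ} (w : Rn n → ℝ) : Prop :=
  ∃ C > (0 : ℝ), ∃ δ > (0 : ℝ), ∀ Q : Cube n, ∀ S ⊆ Q.carrier, MeasurableSet S →
    wMeasure n w S ≤
      ENNReal.ofReal C * (volume S / volume Q.carrier) ^ δ * wMeasure n w Q.carrier

/-- `‖g‖_{L^p(w)}` for an `ℝ≥0∞`-valued `g`. -/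
def lpNormW (n : ℕ) (p : ℝ) (w : Rn n → ℝ) (g : Rn n → ℝ≥0∞) : ℝ≥0∞ :=
  (∫⁻ x, g x ^ p ∂wMeasure n w) ^ (1 / p)

/-- `‖g‖_{L^{p,∞}(w)}` for an `ℝ≥0∞`-valued `g`. -/
def weakNormW (n : ℕ) (p : ℝ) (w : Rn n → ℝ) (g : Rn n → ℝ≥0∞) : ℝ≥0∞ :=
  ⨆ (lam : ℝ) (_ : 0 < lam),
    ENNReal.ofReal lam * wMeasure n w {x | ENNReal.ofReal lam < g x} ^ (1 / p)

/-- Unweighted `L^p` "norm" of an `ℝ≥0∞`-valued function. -/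
def lqNorm (n : ℕ) (p : ℝ) (g : Rn n → ℝ≥0∞) : ℝ≥0∞ :=
  (∫⁻ x, g x ^ p) ^ (1 / p)

/-- Unweighted weak `L^p` norm of an `ℝ≥0∞`-valued function. -/
def weakNorm (n : ℕ) (p : ℝ) (g : Rn n → ℝ≥0∞) : ℝ≥0∞ :=
  ⨆ (lam : ℝ) (_ : 0 < lam),
    ENNReal.ofReal lam * volume {x | ENNReal.ofReal lam < g x} ^ (1 / p)

/-- Maximal function of a measure over cubes. -/
def measMax (n : ℕ) (μ : Measure (Rn n)) (x : Rn n) : ℝ≥0∞ :=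
  ⨆ (Q : Cube n) (_ : x ∈ Q.carrier), μ Q.carrier / volume Q.carrier

/-- The rough fractional maximal operator `M_{Ω,α}`. -/
def roughMax (n : ℕ) (α : ℝ) (Ω f : Rn n → ℝ) (x : Rn n) : ℝ≥0∞ :=
  ⨆ (t : ℝ) (_ : 0 < t),
    ENNReal.ofReal (t ^ (α - 1)) * ((volume (ball (0 : Rn n) t))⁻¹ *
      ∫⁻ y in ball (0 : Rn n) t, ENNReal.ofReal |Ω (‖y‖⁻¹ • y) * f (x - y)|)

/-- Average of `f` over the ball `B(x,t)`. -/
def ballAvg {n : ℕ} (f : Rn n → ℝ) (x : Rn n) (t : ℝ) : ℝ :=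
  ⨍ y in ball x t, f y

/-- The sharp rough fractional maximal operator `M^#_{Ω,α}`. -/
def roughMaxSharp (n : ℕ) (α : ℝ) (Ω f : Rn n → ℝ) (x : Rn n) : ℝ≥0∞ :=
  ⨆ (t : ℝ) (_ : 0 < t),
    ENNReal.ofReal (t ^ (α - 1)) * ((volume (ball (0 : Rn n) t))⁻¹ *
      ∫⁻ y in ball (0 : Rn n) t,
        ENNReal.ofReal (|Ω (‖y‖⁻¹ • y)| * |f (x - y) - ballAvg f x t|))

/-- The natural rough maximal operator `M^♮_Ω` (with `α = 1`). -/
def roughMaxNatural (n : ℕ) (Ω f : Rn n → ℝ) (x : Rn n) : ℝ≥0∞ :=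
  ⨆ (t : ℝ) (_ : 0 < t),
    ENNReal.ofReal |⨍ y in ball (0 : Rn n) t, Ω (‖y‖⁻¹ • y) * f (x - y)|

/-- The fractional spherical maximal operator `𝒮_β`. -/
def sphMax (n : ℕ) (β : ℝ) (f : Rn n → ℝ) (x : Rn n) : ℝ≥0∞ :=
  ⨆ (r : ℝ) (_ : 0 < r),
    ENNReal.ofReal (r ^ β) *
      ((MeasureTheory.Measure.hausdorffMeasure ((n : ℝ) - 1) (sphere x r))⁻¹ *
        ∫⁻ y in sphere x r, ENNReal.ofReal |f y|
          ∂(MeasureTheory.Measure.hausdorffMeasure ((n : ℝ) - 1)))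


/-- The measure `w^q dx`. -/
def wqMeasure (n : ℕ) (q : ℝ) (w : Rn n → ℝ) : Measure (Rn n) :=
  volume.withDensity fun x => ENNReal.ofReal (w x) ^ q

/-- Weak norm `‖g‖_{L^{q,∞}(w^q)}` for `ℝ≥0∞`-valued `g`. -/
def weakNormWq (n : ℕ) (q : ℝ) (w : Rn n → ℝ) (g : Rn n → ℝ≥0∞) : ℝ≥0∞ :=
  ⨆ (lam : ℝ) (_ : 0 < lam),
    ENNReal.ofReal lam * wqMeasure n q w {x | ENNReal.ofReal lam < g x} ^ (1 / q)

/-!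
Along the ray from `x` in the direction `w`, compact support gives
`|f (x + r w)| ≤ ∫_r^∞ |∇f| (x + t w) dt`, and `r ^ (α - 1) ≤ t ^ (α - 1)` there because `α ≥ 1`.
Averaging over `w` in the unit sphere, the right-hand side becomes the Riesz potential of `|∇f|`
in polar coordinates around `x`.

Polar coordinates use the cone measure of the unit sphere, while the spherical average uses a
Hausdorff measure. Both give the same mass to all balls of a given radius, by reflections, and by
Christensen's theorem such measures on a metric space are proportional, so the averages agree.
-/

section UniformlyDistributed

variable {X : Type*} [PseudoMetricSpace X] [MeasurableSpace X]

/-- A measure is uniformly distributed if the mass of a ball depends only on its radius. Unlike in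
the usual definition, balls may have mass `0` or `∞`. -/
def IsUniformlyDistributed (μ : Measure X) : Prop :=
  ∀ (x y : X) (r : ℝ), μ (ball x r) = μ (ball y r)

variable [SecondCountableTopology X] {μ ν : Measure X}

lemma setLIntegral_measure_ball_le_thickening [OpensMeasurableSpace X] [SFinite μ] [SFinite ν]
    {s : Set X} (hs : MeasurableSet s) (r : ℝ) :
    ∫⁻ y in s, μ (ball y r) ∂ν ≤ ∫⁻ x in thickening r s, ν (ball x r) ∂μ := by
  have near_measurable : MeasurableSet {p : X × X | dist p.2 p.1 < r} :=
    (isOpen_lt (by fun_prop) (by fun_prop)).measurableSet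
  calc ∫⁻ y in s, μ (ball y r) ∂ν
      = ((ν.restrict s).prod μ) {p | dist p.2 p.1 < r} :=
        (Measure.prod_apply near_measurable).symm
    _ = ∫⁻ x, ν.restrict s {y | dist x y < r} ∂μ := Measure.prod_apply_symm near_measurable
    _ ≤ ∫⁻ x, (thickening r s).indicator (fun x => ν (ball x r)) x ∂μ := by
        refine lintegral_mono fun x => ?_
        rw [Measure.restrict_apply' hs]
        by_cases hx : x ∈ thickening r s
        · rw [indicator_of_mem hx]
          exact measure_mono fun y hy => mem_ball'.2 hy.1
        · have disjoint_slice : {y | dist x y < r} ∩ s = ∅ :=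
            eq_empty_of_forall_notMem fun y hy => hx (mem_thickening_iff.2 ⟨y, hy.2, hy.1⟩)
          simp [disjoint_slice]
    _ = ∫⁻ x in thickening r s, ν (ball x r) ∂μ :=
        lintegral_indicator isOpen_thickening.measurableSet _

namespace IsUniformlyDistributed

lemma measure_ball_mul_le_thickening [OpensMeasurableSpace X] [SFinite μ] [SFinite ν]
    (hμ : IsUniformlyDistributed μ) (hν : IsUniformlyDistributed ν)
    {s : Set X} (hs : MeasurableSet s) (x : X) (r : ℝ) :
    μ (ball x r) * ν s ≤ ν (ball x r) * μ (thickening r s) := by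
  have h := setLIntegral_measure_ball_le_thickening (μ := μ) (ν := ν) hs r
  simpa only [hμ _ x r, hν _ x r, setLIntegral_const] using h

lemma measure_ball_mul_univ [OpensMeasurableSpace X] [SFinite μ] [SFinite ν]
    (hμ : IsUniformlyDistributed μ) (hν : IsUniformlyDistributed ν) (x : X) (r : ℝ) :
    μ (ball x r) * ν univ = ν (ball x r) * μ univ :=
  le_antisymm
    ((hμ.measure_ball_mul_le_thickening hν .univ x r).trans
      (mul_le_mul_right (measure_mono (subset_univ _)) _))
    ((hν.measure_ball_mul_le_thickening hμ .univ x r).trans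
      (mul_le_mul_right (measure_mono (subset_univ _)) _))

lemma measure_ball_ne_zero (hμ : IsUniformlyDistributed μ) (h0 : μ ≠ 0) (x : X) {r : ℝ}
    (hr : 0 < r) : μ (ball x r) ≠ 0 := by
  contrapose! h0
  refine Measure.measure_univ_eq_zero.1 (measure_null_of_locally_null _ fun y _ => ?_)
  exact ⟨ball y r, mem_nhdsWithin_of_mem_nhds (ball_mem_nhds y hr), hμ x y r ▸ h0⟩

lemma univ_mul_measure_le_of_isClosed [OpensMeasurableSpace X] [IsFiniteMeasure μ]
    [IsFiniteMeasure ν] (hμ : IsUniformlyDistributed μ) (hν : IsUniformlyDistributed ν)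
    {s : Set X} (hs : IsClosed s) : μ univ * ν s ≤ ν univ * μ s := by
  rcases eq_or_ne ν 0 with rfl | hν0
  · simp
  rcases s.eq_empty_or_nonempty with rfl | ⟨o, -⟩
  · simp
  have le_thickening : ∀ r > 0, μ univ * ν s ≤ ν univ * μ (thickening r s) := by
    intro r hr
    refine (ENNReal.mul_le_mul_iff_right (hν.measure_ball_ne_zero hν0 o hr)
      (measure_ne_top ν (ball o r))).1 ?_
    calc ν (ball o r) * (μ univ * ν s)
        = ν univ * (μ (ball o r) * ν s) := by
          rw [← mul_assoc, ← hμ.measure_ball_mul_univ hν]; ring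
      _ ≤ ν univ * (ν (ball o r) * μ (thickening r s)) :=
          mul_le_mul_right (hμ.measure_ball_mul_le_thickening hν hs.measurableSet o r) _
      _ = ν (ball o r) * (ν univ * μ (thickening r s)) := by ring
  have thickening_tendsto : Tendsto (fun r => μ (thickening r s)) (𝓝[>] 0) (𝓝 (μ s)) :=
    tendsto_measure_thickening_of_isClosed ⟨1, one_pos, measure_ne_top _ _⟩ hs
  exact ge_of_tendsto
    (ENNReal.Tendsto.const_mul thickening_tendsto (Or.inr (measure_ne_top ν univ)))
    (eventually_mem_nhdsWithin.mono le_thickening)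

/-- Christensen's theorem, for finite measures. -/
theorem univ_smul_eq [BorelSpace X] [IsFiniteMeasure μ] [IsFiniteMeasure ν]
    (hμ : IsUniformlyDistributed μ) (hν : IsUniformlyDistributed ν) :
    ν univ • μ = μ univ • ν := by
  have : IsFiniteMeasure (ν univ • μ) := Measure.smul_finite μ (measure_ne_top ν univ)
  refine ext_of_generate_finite {s | IsClosed s}
    (BorelSpace.measurable_eq.trans borel_eq_generateFrom_isClosed) isPiSystem_isClosed
    (fun s hs => ?_) ?_
  · exact le_antisymm (hν.univ_mul_measure_le_of_isClosed hμ hs)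
      (hμ.univ_mul_measure_le_of_isClosed hν hs)
  · simp only [Measure.smul_apply, smul_eq_mul, mul_comm]

theorem laverage_eq [BorelSpace X] [IsFiniteMeasure μ] [IsFiniteMeasure ν] [NeZero μ] [NeZero ν]
    (hμ : IsUniformlyDistributed μ) (hν : IsUniformlyDistributed ν) (g : X → ℝ≥0∞) :
    ⨍⁻ x, g x ∂μ = ⨍⁻ x, g x ∂ν := by
  have hμ0 : μ univ ≠ 0 := NeZero.ne _
  have hν0 : ν univ ≠ 0 := NeZero.ne _
  have normalized_eq : (μ univ)⁻¹ • μ = (ν univ)⁻¹ • ν := by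
    calc (μ univ)⁻¹ • μ = ((μ univ)⁻¹ * (ν univ)⁻¹) • ν univ • μ := by
          rw [smul_smul, mul_assoc, ENNReal.inv_mul_cancel hν0 (measure_ne_top _ _), mul_one]
      _ = ((ν univ)⁻¹ * (μ univ)⁻¹) • μ univ • ν := by rw [hμ.univ_smul_eq hν, mul_comm]
      _ = (ν univ)⁻¹ • ν := by
          rw [smul_smul, mul_assoc, ENNReal.inv_mul_cancel hμ0 (measure_ne_top _ _), mul_one]
  rw [laverage, laverage, normalized_eq]

end IsUniformlyDistributed

end UniformlyDistributed

section SphereParam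

variable {E : Type*} [NormedAddCommGroup E] [NormedSpace ℝ E]

/-- The parametrization `w ↦ x + r w` of the sphere of centre `x` and radius `r` by the unit
sphere. -/
def sphereParam (x : E) (r : ℝ) (w : sphere (0 : E) 1) : E := x + r • (w : E)

lemma continuous_sphereParam (x : E) (r : ℝ) : Continuous (sphereParam x r) := by
  unfold sphereParam
  fun_prop

lemma sphereParam_injective (x : E) {r : ℝ} (hr : r ≠ 0) :
    Function.Injective (sphereParam x r) := fun _ _ h =>
  Subtype.ext (smul_right_injective E hr (add_left_cancel h))

lemma range_sphereParam (x : E) {r : ℝ} (hr : 0 < r) : range (sphereParam x r) = sphere x r := by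
  ext y
  constructor
  · rintro ⟨w, rfl⟩
    simp [sphereParam, norm_smul, abs_of_pos hr]
  · intro hy
    rw [mem_sphere_iff_norm] at hy
    exact ⟨⟨r⁻¹ • (y - x), by simp [norm_smul, hy, abs_of_pos hr, hr.ne']⟩,
      by simp [sphereParam, smul_smul, hr.ne']⟩

lemma image_coe_ball_eq_of_map_eq (R : E ≃ₗᵢ[ℝ] E) {a b : sphere (0 : E) 1} (h : R a = b)
    (ρ : ℝ) :
    ((↑) '' ball b ρ : Set E) = R '' ((↑) '' ball a ρ) := by
  have setOf_eq_sphere : {y : E | y ∈ sphere (0 : E) 1} = sphere 0 1 := rfl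
  rw [Subtype.image_ball, Subtype.image_ball, setOf_eq_sphere, image_inter R.injective,
    LinearIsometryEquiv.image_ball, LinearIsometryEquiv.image_sphere, h, map_zero]

variable [FiniteDimensional ℝ E] [MeasurableSpace E] [BorelSpace E]

lemma measurableEmbedding_sphereParam (x : E) {r : ℝ} (hr : r ≠ 0) :
    MeasurableEmbedding (sphereParam x r) :=
  ((continuous_sphereParam x r).isClosedEmbedding
    (sphereParam_injective x hr)).measurableEmbedding

lemma map_comap_sphereParam (μ : Measure E) (x : E) {r : ℝ} (hr : 0 < r) :
    (μ.comap (sphereParam x r)).map (sphereParam x r) = μ.restrict (sphere x r) := by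
  rw [(measurableEmbedding_sphereParam x hr.ne').map_comap, range_sphereParam x hr]

lemma comap_sphereParam_univ (μ : Measure E) (x : E) {r : ℝ} (hr : 0 < r) :
    μ.comap (sphereParam x r) univ = μ (sphere x r) := by
  rw [(measurableEmbedding_sphereParam x hr.ne').comap_apply, image_univ, range_sphereParam x hr]

lemma setLAverage_sphere_eq_laverage_comap (μ : Measure E) (x : E) {r : ℝ} (hr : 0 < r)
    (g : E → ℝ≥0∞) :
    ⨍⁻ y in sphere x r, g y ∂μ =
      ⨍⁻ w, g (sphereParam x r w) ∂μ.comap (sphereParam x r) := by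
  rw [setLAverage_eq, laverage_eq, ← map_comap_sphereParam μ x hr,
    (measurableEmbedding_sphereParam x hr.ne').lintegral_map, comap_sphereParam_univ μ x hr]

end SphereParam

section SphericalAverage

variable {E : Type*} [NormedAddCommGroup E] [InnerProductSpace ℝ E]

lemma exists_linearIsometryEquiv_map_eq_of_norm_eq {a b : E} (h : ‖a‖ = ‖b‖) :
    ∃ R : E ≃ₗᵢ[ℝ] E, R a = b :=
  ⟨(ℝ ∙ (a - b))ᗮ.reflection, Submodule.reflection_sub h⟩

variable [FiniteDimensional ℝ E] [MeasurableSpace E] [BorelSpace E]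

open scoped Pointwise in
lemma isUniformlyDistributed_toSphere :
    IsUniformlyDistributed (volume : Measure E).toSphere := by
  intro a b ρ
  obtain ⟨R, hR⟩ : ∃ R : E ≃ₗᵢ[ℝ] E, R a = b :=
    exists_linearIsometryEquiv_map_eq_of_norm_eq (by simp)
  have cone_eq : Ioo (0 : ℝ) 1 • (R '' ((↑) '' ball a ρ)) =
      R '' (Ioo (0 : ℝ) 1 • ((↑) '' ball a ρ)) := by
    simp only [← image2_smul, image_image2, image2_image_right, map_smul]
  rw [Measure.toSphere_apply' _ measurableSet_ball, Measure.toSphere_apply' _ measurableSet_ball,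
    image_coe_ball_eq_of_map_eq R hR, cone_eq, LinearIsometryEquiv.image_eq_preimage_symm,
    R.symm.measurePreserving.measure_preimage_emb R.symm.toHomeomorph.measurableEmbedding]

lemma isUniformlyDistributed_comap_hausdorffMeasure (d : ℝ) (x : E) {r : ℝ} (hr : r ≠ 0) :
    IsUniformlyDistributed
      ((Measure.hausdorffMeasure d : Measure E).comap (sphereParam x r)) := by
  intro a b ρ
  obtain ⟨R, hR⟩ : ∃ R : E ≃ₗᵢ[ℝ] E, R a = b :=
    exists_linearIsometryEquiv_map_eq_of_norm_eq (by simp)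
  let rotation : E ≃ᵢ E :=
    ((IsometryEquiv.subRight x).trans R.toIsometryEquiv).trans (IsometryEquiv.addLeft x)
  have image_eq : ∀ s, sphereParam x r '' s = (fun w => x + r • w) '' ((↑) '' s) :=
    fun s => by rw [image_image]; rfl
  have image_ball_eq : sphereParam x r '' ball b ρ = rotation '' (sphereParam x r '' ball a ρ) := by
    rw [image_eq, image_eq, image_coe_ball_eq_of_map_eq R hR]
    simp only [image_image]
    exact image_congr fun w _ => by simp [rotation]
  have emb := measurableEmbedding_sphereParam x hr
  rw [emb.comap_apply, emb.comap_apply, image_ball_eq, rotation.hausdorffMeasure_image]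

-- Equality holds unless the sphere has measure `0` or `∞`, when the left-hand side is `0`.
theorem setLAverage_hausdorffMeasure_sphere_le [Nontrivial E] (d : ℝ) (x : E) {r : ℝ}
    (hr : 0 < r) (g : E → ℝ≥0∞) :
    ⨍⁻ y in sphere x r, g y ∂Measure.hausdorffMeasure d ≤
      ⨍⁻ w, g (sphereParam x r w) ∂(volume : Measure E).toSphere := by
  set H : Measure E := Measure.hausdorffMeasure d
  rcases eq_or_ne (H (sphere x r)) 0 with hzero | hzero
  · simp [Measure.restrict_eq_zero.2 hzero]
  rcases eq_or_ne (H (sphere x r)) ∞ with htop | htop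
  · simp [setLAverage_eq, htop]
  have univ_eq := comap_sphereParam_univ H x hr
  have : IsFiniteMeasure (H.comap (sphereParam x r)) := ⟨univ_eq ▸ htop.lt_top⟩
  have : NeZero (H.comap (sphereParam x r)) :=
    ⟨mt Measure.measure_univ_eq_zero.2 (univ_eq ▸ hzero)⟩
  have : NeZero (volume : Measure E).toSphere := ⟨Measure.toSphere_ne_zero _⟩
  rw [setLAverage_sphere_eq_laverage_comap H x hr]
  exact ((isUniformlyDistributed_comap_hausdorffMeasure d x hr.ne').laverage_eq
    isUniformlyDistributed_toSphere _).le

end SphericalAverage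

section PolarCoordinates

variable {E : Type*} [NormedAddCommGroup E] [NormedSpace ℝ E] [FiniteDimensional ℝ E]
  [Nontrivial E] [MeasurableSpace E] [BorelSpace E]

lemma lintegral_volumeIoiPow (k : ℕ) {g : ℝ → ℝ≥0∞} (hg : Measurable g) :
    ∫⁻ t, g t ∂Measure.volumeIoiPow k = ∫⁻ t in Ioi (0 : ℝ), ENNReal.ofReal (t ^ k) * g t := by
  rw [Measure.volumeIoiPow, lintegral_withDensity_eq_lintegral_mul _ (by fun_prop) (by fun_prop),
    ← lintegral_subtype_comap measurableSet_Ioi]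
  rfl

theorem lintegral_eq_lintegral_toSphere_lintegral_Ioi (μ : Measure E) [μ.IsAddHaarMeasure]
    {g : E → ℝ≥0∞} (hg : Measurable g) :
    ∫⁻ y, g y ∂μ = ∫⁻ w, ∫⁻ t in Ioi (0 : ℝ),
      ENNReal.ofReal (t ^ (Module.finrank ℝ E - 1)) * g (t • (w : E)) ∂volume ∂μ.toSphere := by
  have polar_measurable :
      Measurable fun p : sphere (0 : E) 1 × Ioi (0 : ℝ) => g ((p.2 : ℝ) • (p.1 : E)) :=
    hg.comp (by fun_prop)
  calc ∫⁻ y, g y ∂μ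
      = ∫⁻ y : ({0}ᶜ : Set E), g y ∂μ.comap (↑) := by
        rw [lintegral_subtype_comap (measurableSet_singleton _).compl, restrict_compl_singleton]
    _ = ∫⁻ y : ({0}ᶜ : Set E), g (((homeomorphUnitSphereProd E y).2 : ℝ) •
          ((homeomorphUnitSphereProd E y).1 : E)) ∂μ.comap (↑) := by
        refine lintegral_congr fun y => congrArg g ?_
        simp [smul_smul, norm_ne_zero_iff.2 y.2]
    _ = ∫⁻ p, g ((p.2 : ℝ) • (p.1 : E))
          ∂μ.toSphere.prod (Measure.volumeIoiPow (Module.finrank ℝ E - 1)) :=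
        μ.measurePreserving_homeomorphUnitSphereProd.lintegral_comp polar_measurable
    _ = _ := by
        rw [lintegral_prod _ polar_measurable.aemeasurable]
        exact lintegral_congr fun w =>
          lintegral_volumeIoiPow _ (g := fun t => g (t • (w : E))) (by fun_prop)

end PolarCoordinates

section Rays

variable {E F : Type*} [NormedAddCommGroup E] [NormedSpace ℝ E] [NormedAddCommGroup F]
  [NormedSpace ℝ F]

lemma enorm_le_lintegral_Ioi_deriv {f : ℝ → F} (hf : ContDiff ℝ 1 f) (hfc : HasCompactSupport f)
    (r : ℝ) : ‖f r‖ₑ ≤ ∫⁻ t in Ioi r, ‖deriv f t‖ₑ := by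
  calc ‖f r‖ₑ
      ≤ ∫⁻ s in Iic (-r), ‖deriv (fun s => f (-s)) s‖ₑ := by
        simpa [Function.comp_def] using HasCompactSupport.enorm_le_lintegral_Ici_deriv
          (hf.comp contDiff_neg) (hfc.comp_homeomorph (Homeomorph.neg ℝ)) (-r)
    _ = ∫⁻ s in Neg.neg ⁻¹' Ici r, ‖deriv f (-s)‖ₑ := by
        simp only [deriv_comp_neg, enorm_neg, neg_preimage, neg_Ici]
    _ = ∫⁻ t in Ioi r, ‖deriv f t‖ₑ := by
        rw [restrict_Ioi_eq_restrict_Ici]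
        exact (Measure.measurePreserving_neg volume).setLIntegral_comp_preimage_emb
          (Homeomorph.neg ℝ).measurableEmbedding (fun t => ‖deriv f t‖ₑ) (Ici r)

variable {f : E → F}

lemma enorm_le_lintegral_Ioi_fderiv_ray (hf : ContDiff ℝ 1 f) (hfc : HasCompactSupport f)
    (x : E) {w : E} (hw : ‖w‖ = 1) (r : ℝ) :
    ‖f (x + r • w)‖ₑ ≤ ∫⁻ t in Ioi r, ‖fderiv ℝ f (x + t • w)‖ₑ := by
  have ray_isometry : Isometry fun t : ℝ => x + t • w :=
    Isometry.of_dist_eq fun s t => by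
      rw [dist_add_left, dist_eq_norm, ← sub_smul, norm_smul, hw, mul_one, dist_eq_norm]
  refine (enorm_le_lintegral_Ioi_deriv (f := fun t => f (x + t • w)) (hf.comp (by fun_prop))
    (hfc.comp_isClosedEmbedding ray_isometry.isClosedEmbedding) r).trans
    (lintegral_mono fun t => ?_)
  have deriv_eq : deriv (fun t => f (x + t • w)) t = fderiv ℝ f (x + t • w) w := by
    have ray_deriv : HasDerivAt (fun t : ℝ => x + t • w) w t := by
      simpa using ((hasDerivAt_id t).smul_const w).const_add x
    exact ((hf.differentiable one_ne_zero _).hasFDerivAt.comp_hasDerivAt t ray_deriv).deriv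
  rw [deriv_eq, ← ofReal_norm, ← ofReal_norm]
  exact ENNReal.ofReal_le_ofReal (by simpa [hw] using (fderiv ℝ f (x + t • w)).le_opNorm w)

lemma rpow_mul_enorm_le_lintegral_rpow_mul_fderiv_ray (hf : ContDiff ℝ 1 f)
    (hfc : HasCompactSupport f) (x : E) {w : E} (hw : ‖w‖ = 1) {r β : ℝ} (hr : 0 ≤ r)
    (hβ : 0 ≤ β) :
    ENNReal.ofReal (r ^ β) * ‖f (x + r • w)‖ₑ ≤
      ∫⁻ t in Ioi (0 : ℝ), ENNReal.ofReal (t ^ β) * ‖fderiv ℝ f (x + t • w)‖ₑ := by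
  calc ENNReal.ofReal (r ^ β) * ‖f (x + r • w)‖ₑ
      ≤ ENNReal.ofReal (r ^ β) * ∫⁻ t in Ioi r, ‖fderiv ℝ f (x + t • w)‖ₑ := by
        gcongr
        exact enorm_le_lintegral_Ioi_fderiv_ray hf hfc x hw r
    _ = ∫⁻ t in Ioi r, ENNReal.ofReal (r ^ β) * ‖fderiv ℝ f (x + t • w)‖ₑ :=
        (lintegral_const_mul' _ _ ENNReal.ofReal_ne_top).symm
    _ ≤ ∫⁻ t in Ioi r, ENNReal.ofReal (t ^ β) * ‖fderiv ℝ f (x + t • w)‖ₑ := by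
        refine setLIntegral_mono' measurableSet_Ioi fun t ht => ?_
        have hrt : r ≤ t := (mem_Ioi.1 ht).le
        gcongr
    _ ≤ ∫⁻ t in Ioi (0 : ℝ), ENNReal.ofReal (t ^ β) * ‖fderiv ℝ f (x + t • w)‖ₑ :=
        lintegral_mono_set (Ioi_subset_Ioi hr)

end Rays

section RieszPotential

variable {n : ℕ}

lemma gradNorm_eq_norm_fderiv (f : Rn n → ℝ) : gradNorm f = fun y => ‖fderiv ℝ f y‖ := by
  ext y
  simp [gradNorm, gradient]

lemma measurable_gradNorm {f : Rn n → ℝ} (hf : ContDiff ℝ 1 f) : Measurable (gradNorm f) := by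
  rw [gradNorm_eq_norm_fderiv]
  exact (hf.continuous_fderiv one_ne_zero).norm.measurable

lemma sphMax_eq_iSup_setLAverage (β : ℝ) (f : Rn n → ℝ) (x : Rn n) :
    sphMax n β f x = ⨆ (r : ℝ) (_ : 0 < r), ENNReal.ofReal (r ^ β) *
      ⨍⁻ y in sphere x r, ‖f y‖ₑ ∂Measure.hausdorffMeasure ((n : ℝ) - 1) := by
  simp only [sphMax, setLAverage_eq, ENNReal.div_eq_inv_mul, Real.enorm_eq_ofReal_abs]

lemma pow_mul_div_rpow_sub (hn : 1 ≤ n) (α : ℝ) {t : ℝ} (ht : 0 < t) (a : ℝ≥0∞) :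
    ENNReal.ofReal (t ^ (n - 1)) * (a / ENNReal.ofReal (t ^ ((n : ℝ) - α))) =
      ENNReal.ofReal (t ^ (α - 1)) * a := by
  have rpow_eq : t ^ (n - 1) / t ^ ((n : ℝ) - α) = t ^ (α - 1) := by
    rw [← Real.rpow_natCast, ← Real.rpow_sub ht, Nat.cast_sub hn]
    ring_nf
  rw [← rpow_eq, ENNReal.ofReal_div_of_pos (by positivity), div_eq_mul_inv, div_eq_mul_inv]
  ring

lemma rieszPot_eq_lintegral_polar (hn : 1 ≤ n) (α : ℝ) {g : Rn n → ℝ} (hg : Measurable g)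
    (x : Rn n) :
    rieszPot n α g x = ∫⁻ w, ∫⁻ t in Ioi (0 : ℝ),
      ENNReal.ofReal (t ^ (α - 1)) * ENNReal.ofReal (g (x + t • (w : Rn n)))
      ∂volume ∂(volume : Measure (Rn n)).toSphere := by
  have : Nonempty (Fin n) := ⟨⟨0, hn⟩⟩
  rw [rieszPot, ← lintegral_add_left_eq_self _ x,
    lintegral_eq_lintegral_toSphere_lintegral_Ioi _ (by fun_prop), finrank_euclideanSpace_fin]
  refine lintegral_congr fun w => setLIntegral_congr_fun measurableSet_Ioi fun t ht => ?_
  have norm_eq : ‖x - (x + t • (w : Rn n))‖ = t := by simp [norm_smul, abs_of_pos (mem_Ioi.1 ht)]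
  simp only [norm_eq]
  exact pow_mul_div_rpow_sub hn α ht _

lemma sphMax_le_inv_mul_rieszPot (hn : 1 ≤ n) {α : ℝ} (hα : 1 ≤ α) {f : Rn n → ℝ}
    (hf : ContDiff ℝ 1 f) (hfc : HasCompactSupport f) (x : Rn n) :
    sphMax n (α - 1) f x ≤
      ((volume : Measure (Rn n)).toSphere univ)⁻¹ * rieszPot n α (gradNorm f) x := by
  have : Nonempty (Fin n) := ⟨⟨0, hn⟩⟩
  set σ := (volume : Measure (Rn n)).toSphere
  rw [sphMax_eq_iSup_setLAverage, rieszPot_eq_lintegral_polar hn α (measurable_gradNorm hf)]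
  refine iSup₂_le fun r hr => ?_
  calc ENNReal.ofReal (r ^ (α - 1)) *
        ⨍⁻ y in sphere x r, ‖f y‖ₑ ∂Measure.hausdorffMeasure ((n : ℝ) - 1)
      ≤ ENNReal.ofReal (r ^ (α - 1)) * ⨍⁻ w, ‖f (sphereParam x r w)‖ₑ ∂σ :=
        mul_le_mul_right (setLAverage_hausdorffMeasure_sphere_le _ x hr _) _
    _ = (σ univ)⁻¹ * ∫⁻ w, ENNReal.ofReal (r ^ (α - 1)) * ‖f (x + r • (w : Rn n))‖ₑ ∂σ := by
        rw [laverage_eq, ENNReal.div_eq_inv_mul, lintegral_const_mul' _ _ ENNReal.ofReal_ne_top]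
        exact mul_left_comm _ _ _
    _ ≤ _ := by
        simp only [gradNorm_eq_norm_fderiv, ofReal_norm]
        gcongr with w
        exact rpow_mul_enorm_le_lintegral_rpow_mul_fderiv_ray hf hfc x
          (norm_eq_of_mem_sphere w) hr.le (sub_nonneg.2 hα)

end RieszPotential

theorem statement15_general (n : ℕ) (hn : 1 ≤ n) :
    ∃ c > (0 : ℝ), ∀ α : ℝ, 1 ≤ α → ∀ f : Rn n → ℝ, ContDiff ℝ 1 f → HasCompactSupport f →
      ∀ x : Rn n, sphMax n (α - 1) f x ≤ ENNReal.ofReal c * rieszPot n α (gradNorm f) x := by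
  have : Nonempty (Fin n) := ⟨⟨0, hn⟩⟩
  set σ := (volume : Measure (Rn n)).toSphere
  have inv_ne_top : (σ univ)⁻¹ ≠ ∞ :=
    ENNReal.inv_ne_top.2 (mt Measure.measure_univ_eq_zero.1 (Measure.toSphere_ne_zero _))
  have inv_ne_zero : (σ univ)⁻¹ ≠ 0 := ENNReal.inv_ne_zero.2 (measure_ne_top _ _)
  refine ⟨(σ univ)⁻¹.toReal, ENNReal.toReal_pos inv_ne_zero inv_ne_top, ?_⟩
  intro α hα f hf hfc x
  rw [ENNReal.ofReal_toReal inv_ne_top]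
  exact sphMax_le_inv_mul_rieszPot hn hα hf hfc x

/-- Pointwise bound for the fractional spherical maximal operator:
`𝒮_{α-1} f(x) ≤ c_n I_α(|∇f|)(x)` for `f ∈ C_c^∞`. -/
theorem statement15 (n : ℕ) (hn : 2 ≤ n) (α : ℝ) (hα1 : 1 ≤ α) (hαn : α < n) :
    ∃ c > (0 : ℝ), ∀ f : Rn n → ℝ, IsCcSmooth f → ∀ x : Rn n,
      sphMax n (α - 1) f x ≤ ENNReal.ofReal c * rieszPot n α (gradNorm f) x := by
  obtain ⟨c, hc, hbound⟩ := statement15_general n (by omega)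
  exact ⟨c, hc, fun f hf x => hbound α hα1 f (hf.1.of_le (by exact_mod_cast le_top)) hf.2 x⟩

end
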